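/- (Key step in the proof of Theorem 2.) Let q : ℝⁿ → ℝ be a nonnegative Lebesgue-integrable function, v : ℝⁿ → ℝ a nonnegative measurable function, and let ν be the measure on ℝⁿ with density v with respect to Lebesgue measure. Fix α > 0, let A = {x : q(x) ≥ α · v(x)} and c = ∫_A q(x) dx. If B is any measurable subset of ℝⁿ with ∫_B q(x) dx ≥ c, then ν(A ∩ Bᶜ) ≤ ν(B ∩ Aᶜ), where Bᶜ and Aᶜ denote set complements. -/

import Mathlib

open MeasureTheory ENNReal

/-!
On `A \ B` we have `α * v ≤ q` and on `B \ A` we have `q ≤ α * v`. Removing the common part `A ∩ B`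
from `∫_A q ≤ ∫_B q` therefore gives
`α * ν (A \ B) ≤ ∫_{A \ B} q ≤ ∫_{B \ A} q ≤ α * ν (B \ A)`.
The outer terms may be infinite, so the chain is carried out in `ℝ≥0∞`.
-/

section

variable {X : Type*} [MeasurableSpace X] {μ : Measure X} {s t : Set X} {α : ℝ}

theorem setIntegral_sdiff_le_setIntegral_sdiff_iff {E : Type*} [NormedAddCommGroup E]
    [NormedSpace ℝ E] [PartialOrder E] [IsOrderedAddMonoid E] {f : X → E}
    (hs : NullMeasurableSet s μ) (ht : NullMeasurableSet t μ)
    (hfs : IntegrableOn f s μ) (hft : IntegrableOn f t μ) :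
    ∫ x in s \ t, f x ∂μ ≤ ∫ x in t \ s, f x ∂μ ↔ ∫ x in s, f x ∂μ ≤ ∫ x in t, f x ∂μ := by
  rw [← integral_inter_add_sdiff₀ ht hfs, ← integral_inter_add_sdiff₀ hs hft, Set.inter_comm t s,
    add_le_add_iff_left]

theorem ofReal_integral_le_lintegral_ofReal (f : X → ℝ) :
    ENNReal.ofReal (∫ x, f x ∂μ) ≤ ∫⁻ x, ENNReal.ofReal (f x) ∂μ := by
  by_cases hf : Integrable f μ
  · rw [integral_eq_lintegral_pos_part_sub_lintegral_neg_part hf]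
    exact (ENNReal.ofReal_le_ofReal (sub_le_self _ toReal_nonneg)).trans ofReal_toReal_le
  · simp [integral_undef hf]

theorem ofReal_mul_withDensity_ofReal_apply (v : X → ℝ) (hα : 0 ≤ α)
    (hs : NullMeasurableSet s μ) :
    ENNReal.ofReal α * μ.withDensity (fun x => ENNReal.ofReal (v x)) s =
      ∫⁻ x in s, ENNReal.ofReal (α * v x) ∂μ := by
  simp_rw [withDensity_apply₀ _ hs, ENNReal.ofReal_mul hα]
  exact (lintegral_const_mul' _ _ ofReal_ne_top).symm

theorem ofReal_mul_withDensity_le_ofReal_setIntegral {q v : X → ℝ} (hα : 0 ≤ α)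
    (hs : NullMeasurableSet s μ) (hq : IntegrableOn q s μ) (hv : 0 ≤ᵐ[μ.restrict s] v)
    (hvq : ∀ᵐ x ∂μ.restrict s, α * v x ≤ q x) :
    ENNReal.ofReal α * μ.withDensity (fun x => ENNReal.ofReal (v x)) s ≤
      ENNReal.ofReal (∫ x in s, q x ∂μ) := by
  have hq_nonneg : 0 ≤ᵐ[μ.restrict s] q := by
    filter_upwards [hv, hvq] with x hvx hvqx using (mul_nonneg hα hvx).trans hvqx
  rw [ofReal_mul_withDensity_ofReal_apply v hα hs, ofReal_integral_eq_lintegral_ofReal hq hq_nonneg]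
  exact lintegral_mono_ae (hvq.mono fun _ => ENNReal.ofReal_le_ofReal)

theorem ofReal_setIntegral_le_ofReal_mul_withDensity {q v : X → ℝ} (hα : 0 ≤ α)
    (hs : NullMeasurableSet s μ) (hqv : ∀ᵐ x ∂μ.restrict s, q x ≤ α * v x) :
    ENNReal.ofReal (∫ x in s, q x ∂μ) ≤
      ENNReal.ofReal α * μ.withDensity (fun x => ENNReal.ofReal (v x)) s := by
  rw [ofReal_mul_withDensity_ofReal_apply v hα hs]
  exact (ofReal_integral_le_lintegral_ofReal q).trans
    (lintegral_mono_ae (hqv.mono fun _ => ENNReal.ofReal_le_ofReal))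

theorem search_time_symmDiff_ineq_general {q v : X → ℝ} (hq : Integrable q μ)
    (hv : AEMeasurable v μ) (hv_nonneg : 0 ≤ᵐ[μ] v) {ν : Measure X}
    (hν : ν = μ.withDensity (fun x => ENNReal.ofReal (v x))) (hα : 0 < α)
    {A B : Set X} (hA : A = {x | α * v x ≤ q x}) (hB : NullMeasurableSet B μ)
    (hAB : ∫ x in A, q x ∂μ ≤ ∫ x in B, q x ∂μ) :
    ν (A \ B) ≤ ν (B \ A) := by
  subst hν
  have hA_meas : NullMeasurableSet A μ :=
    hA ▸ nullMeasurableSet_le (hv.const_mul α) hq.aemeasurable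
  have mem_A {x : X} : x ∈ A ↔ α * v x ≤ q x := hA ▸ Iff.rfl
  have le_on_sdiff : ∀ᵐ x ∂μ.restrict (A \ B), α * v x ≤ q x :=
    (ae_restrict_iff'₀ (hA_meas.diff hB)).mpr <| .of_forall fun _ hx => mem_A.mp hx.1
  have ge_on_sdiff : ∀ᵐ x ∂μ.restrict (B \ A), q x ≤ α * v x :=
    (ae_restrict_iff'₀ (hB.diff hA_meas)).mpr <|
      .of_forall fun _ hx => (not_le.mp (mt mem_A.mpr hx.2)).le
  rw [← ENNReal.mul_le_mul_iff_right (ofReal_pos.mpr hα).ne' ofReal_ne_top]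
  calc ENNReal.ofReal α * μ.withDensity (fun x => ENNReal.ofReal (v x)) (A \ B)
    _ ≤ ENNReal.ofReal (∫ x in A \ B, q x ∂μ) :=
        ofReal_mul_withDensity_le_ofReal_setIntegral hα.le (hA_meas.diff hB) hq.integrableOn
          (ae_restrict_of_ae hv_nonneg) le_on_sdiff
    _ ≤ ENNReal.ofReal (∫ x in B \ A, q x ∂μ) :=
        ENNReal.ofReal_le_ofReal <| (setIntegral_sdiff_le_setIntegral_sdiff_iff hA_meas hB
          hq.integrableOn hq.integrableOn).mpr hAB
    _ ≤ ENNReal.ofReal α * μ.withDensity (fun x => ENNReal.ofReal (v x)) (B \ A) :=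
        ofReal_setIntegral_le_ofReal_mul_withDensity hα.le (hB.diff hA_meas) ge_on_sdiff

end

/-- key step of Theorem 2: with `A = {x : q(x) ≥ α · v(x)}` and
`c = ∫_A q`, any measurable set `B` with `∫_B q ≥ c` satisfies
`ν(A ∩ Bᶜ) ≤ ν(B ∩ Aᶜ)`, where `ν` has density `v` w.r.t. Lebesgue measure. -/
theorem search_time_symmDiff_ineq {n : ℕ}
    (q v : EuclideanSpace ℝ (Fin n) → ℝ)
    (hq_meas : Measurable q) (hq_nonneg : ∀ x, 0 ≤ q x) (hq_int : Integrable q)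
    (hv_meas : Measurable v) (hv_nonneg : ∀ x, 0 ≤ v x)
    (ν : Measure (EuclideanSpace ℝ (Fin n)))
    (hν : ν = volume.withDensity (fun x => ENNReal.ofReal (v x)))
    (α : ℝ) (hα : 0 < α)
    (A : Set (EuclideanSpace ℝ (Fin n))) (hA : A = {x | α * v x ≤ q x})
    (c : ℝ) (hc : c = ∫ x in A, q x)
    (B : Set (EuclideanSpace ℝ (Fin n))) (hB : MeasurableSet B)
    (hBc : c ≤ ∫ x in B, q x) :
    ν (A ∩ Bᶜ) ≤ ν (B ∩ Aᶜ) := by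
  exact search_time_symmDiff_ineq_general hq_int hv_meas.aemeasurable (.of_forall hv_nonneg) hν hα
    hA hB.nullMeasurableSet (hc ▸ hBc)
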